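/- Let p ∈ ℝ[z_1,…,z_n] be a nonzero real stable polynomial and let a ∈ ℝ^n be above the roots of p. Let v and w be unit vectors in ℝ^n with all coordinates nonnegative. Let Φ^v_p denote the function x ↦ (D_v p)(x)/p(x), defined on a neighborhood of a (p(a) ≠ 0 since a is above the roots). Then: (1) Φ^v_p(a) ≥ 0; (2) the directional derivative D_w(Φ^v_p)(a) ≤ 0; (3) the second directional derivative D_w^2(Φ^v_p)(a) ≥ 0. -/

import Mathlib

/-- A multivariate real polynomial is real stable if it does not vanish when all
variables take values in the open upper half plane. -/
def RealStable {σ : Type*} (p : MvPolynomial σ ℝ) : Prop :=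
  ∀ z : σ → ℂ, (∀ i, 0 < (z i).im) → (MvPolynomial.aeval z) p ≠ 0

/-- `a` is above the roots of `p` if `p` does not vanish on `a + ℝ₊ⁿ`. -/
def AboveRoots {σ : Type*} (p : MvPolynomial σ ℝ) (a : σ → ℝ) : Prop :=
  ∀ t : σ → ℝ, (∀ i, 0 ≤ t i) → MvPolynomial.eval (a + t) p ≠ 0

/-- the directional derivative `D_v p` of a polynomial -/
noncomputable def dirDeriv {n : ℕ} (v : Fin n → ℝ) (p : MvPolynomial (Fin n) ℝ) :
    MvPolynomial (Fin n) ℝ :=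
  ∑ i : Fin n, v i • MvPolynomial.pderiv i p

/-- the logarithmic potential `Φ^v_p = D_v p / p` as a function on `ℝⁿ` -/
noncomputable def potential {n : ℕ} (v : Fin n → ℝ) (p : MvPolynomial (Fin n) ℝ)
    (x : Fin n → ℝ) : ℝ :=
  MvPolynomial.eval x (dirDeriv v p) / MvPolynomial.eval x p

open Filter Set Polynomial Topology Bornology ComplexConjugate

/-!
Along a line `t ↦ a + t w` the potential is a rational function `f / g` with real coefficients.
The roots of `s ↦ p (b + s v)` have nonpositive imaginary part when `b` lies in the upper half
plane, so the logarithmic derivative shows that `f / g` sends the upper half plane into the closed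
lower half plane: it is the negative of a rational Nevanlinna function. In lowest terms such a
function has only real simple poles with positive residues and grows at most linearly, with
nonpositive slope, so `f / g = α + β t + ∑ c_r / (t - r)` with `β ≤ 0 ≤ c_r`. Since `a` is above the
roots of `p`, the poles are negative, and every summand is antitone and convex on `[0, ∞)`. When
`w = v` the function is `g' / g`, which tends to `0` at infinity and is therefore nonnegative.
-/

/-! ### Functions mapping the upper half plane to the closed lower half plane -/

/-- `f` maps the open upper half plane into the closed lower half plane, i.e. `-f` satisfies the
sign condition of a Nevanlinna (Pick) function. Holomorphy is not part of the definition: `f` is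
meant to be a quotient of polynomials, which takes the value `0` at zeros of the denominator. -/
def IsAntiNevanlinna (f : ℂ → ℂ) : Prop :=
  ∀ z : ℂ, 0 < z.im → (f z).im ≤ 0

theorem im_div_pow_nonpos_of_tendsto {f : ℂ → ℂ} {r A ω : ℂ} {m : ℕ} (hω : ω ≠ 0)
    (hlim : Tendsto (fun z => (z - r) ^ m * f z) (𝓝[≠] r) (𝓝 A))
    (hf : ∀ᶠ ε : ℝ in 𝓝[>] 0, (f (r + ε * ω)).im ≤ 0) : (A / ω ^ m).im ≤ 0 := by
  have hray : Tendsto (fun ε : ℝ => r + ε * ω) (𝓝[>] 0) (𝓝[≠] r) := by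
    refine tendsto_nhdsWithin_iff.2 ⟨?_, ?_⟩
    · refine (Continuous.tendsto' (by fun_prop) 0 r (by simp)).mono_left nhdsWithin_le_nhds
    · filter_upwards [self_mem_nhdsWithin] with ε hε
      simpa [hω] using hε.ne'
  have hscaled : Tendsto (fun ε : ℝ => ((ε ^ m : ℝ) : ℂ) * f (r + ε * ω)) (𝓝[>] 0)
      (𝓝 (A / ω ^ m)) := by
    refine ((hlim.comp hray).div_const (ω ^ m)).congr fun ε => ?_
    simp only [Function.comp_apply, add_sub_cancel_left, mul_pow, Complex.ofReal_pow]
    field_simp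
  refine le_of_tendsto ((Complex.continuous_im.tendsto _).comp hscaled) ?_
  filter_upwards [hf, self_mem_nhdsWithin] with ε him hε
  rw [Function.comp_apply, Complex.im_ofReal_mul]
  exact mul_nonpos_of_nonneg_of_nonpos (pow_nonneg hε.le m) him

theorem eq_zero_or_eq_one_and_pos_of_im_div_pow_nonpos {A : ℝ} (hA : A ≠ 0) {m : ℕ}
    (h : ∀ ω : ℂ, 0 < ω.im → ((A : ℂ) / ω ^ m).im ≤ 0) : m = 0 ∨ m = 1 ∧ 0 < A := by
  -- Test `h` at `ω = exp (iθ)`: the angle `π / (2m)` gives the sign of `A`, and `3π / (2m)`, which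
  -- is available when `2 ≤ m`, gives the opposite sign.
  have hsin : ∀ θ : ℝ, 0 < θ → θ < Real.pi → 0 ≤ A * Real.sin (m * θ) := by
    intro θ h0 hπ
    have hpow : Complex.exp (θ * Complex.I) ^ m = Complex.exp ((m * θ : ℝ) * Complex.I) := by
      rw [← Complex.exp_nat_mul]
      push_cast
      ring_nf
    have him := h (Complex.exp (θ * Complex.I)) (by
      rw [Complex.exp_ofReal_mul_I_im]
      exact Real.sin_pos_of_pos_of_lt_pi h0 hπ)
    rw [hpow, div_eq_mul_inv, ← Complex.exp_neg, ← neg_mul, ← Complex.ofReal_neg,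
      Complex.im_ofReal_mul, Complex.exp_ofReal_mul_I_im, Real.sin_neg] at him
    linarith
  have hπ := Real.pi_pos
  rcases Nat.eq_zero_or_pos m with rfl | hm
  · exact Or.inl rfl
  have hm' : (1 : ℝ) ≤ m := by exact_mod_cast hm
  have hA0 : 0 < A := by
    have h0 := hsin (Real.pi / 2 / m) (by positivity) (by rw [div_lt_iff₀] <;> nlinarith)
    rw [mul_div_cancel₀ _ (by positivity), Real.sin_pi_div_two, mul_one] at h0
    exact h0.lt_of_ne' hA
  refine Or.inr ⟨le_antisymm ?_ hm, hA0⟩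
  by_contra! hm2
  have hm2' : (2 : ℝ) ≤ m := by exact_mod_cast hm2
  have h0 := hsin (3 * Real.pi / 2 / m) (by positivity) (by rw [div_lt_iff₀] <;> nlinarith)
  rw [mul_div_cancel₀ _ (by positivity), show 3 * Real.pi / 2 = Real.pi / 2 + Real.pi by ring,
    Real.sin_add_pi, Real.sin_pi_div_two] at h0
  linarith

namespace IsAntiNevanlinna

theorem pole_order {f : ℂ → ℂ} (hf : IsAntiNevanlinna f) {r A : ℝ} (hA : A ≠ 0) {m : ℕ}
    (hlim : Tendsto (fun z => (z - r) ^ m * f z) (𝓝[≠] (r : ℂ)) (𝓝 (A : ℂ))) :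
    m = 0 ∨ m = 1 ∧ 0 < A := by
  refine eq_zero_or_eq_one_and_pos_of_im_div_pow_nonpos hA fun ω hω => ?_
  refine im_div_pow_nonpos_of_tendsto (by rintro rfl; simp at hω) hlim ?_
  filter_upwards [self_mem_nhdsWithin] with ε hε
  exact hf _ (by simpa using mul_pos hε hω)

theorem growth_order {f : ℂ → ℂ} (hf : IsAntiNevanlinna f) {A : ℝ} (hA : A ≠ 0) {m : ℕ}
    (hlim : Tendsto (fun z => f z / z ^ m) (cobounded ℂ) (𝓝 (A : ℂ))) :
    m = 0 ∨ m = 1 ∧ A < 0 := by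
  have hinv : IsAntiNevanlinna fun z => f (-z⁻¹) := fun z hz => hf _ <| by
    rw [Complex.neg_im, Complex.inv_im, neg_div, neg_neg]
    exact div_pos hz (Complex.normSq_pos.2 (by rintro rfl; simp at hz))
  have hlim' : Tendsto (fun z => (z - (0 : ℝ)) ^ m * f (-z⁻¹)) (𝓝[≠] ((0 : ℝ) : ℂ))
      (𝓝 (((-1) ^ m * A : ℝ) : ℂ)) := by
    have hneg : Tendsto (fun z : ℂ => -z⁻¹) (𝓝[≠] 0) (cobounded ℂ) :=
      tendsto_neg_cobounded.comp tendsto_inv₀_nhdsNE_zero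
    rw [Complex.ofReal_zero]
    push_cast
    refine ((hlim.comp hneg).const_mul ((-1) ^ m)).congr fun z => ?_
    simp only [Function.comp_apply, sub_zero, neg_pow z⁻¹, inv_pow]
    have : ((-1 : ℂ)) ^ m ≠ 0 := pow_ne_zero _ (by norm_num)
    field_simp
  rcases hinv.pole_order (by positivity) hlim' with h | ⟨rfl, h⟩
  · exact Or.inl h
  · exact Or.inr ⟨rfl, by linarith⟩

theorem pole_order_eq_zero_of_im_pos {f : ℂ → ℂ} (hf : IsAntiNevanlinna f) {r A : ℂ}
    (hr : 0 < r.im) (hA : A ≠ 0) {m : ℕ}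
    (hlim : Tendsto (fun z => (z - r) ^ m * f z) (𝓝[≠] r) (𝓝 A)) : m = 0 := by
  by_contra hm
  -- All directions are allowed at an interior point, in particular one with `A / ω ^ m = i`.
  obtain ⟨ω, hω⟩ := IsAlgClosed.exists_pow_nat_eq (A * -Complex.I) (Nat.pos_of_ne_zero hm)
  have hω0 : ω ≠ 0 := by
    rintro rfl
    simp [hm, hA, eq_comm] at hω
  have hnear : ∀ᶠ ε : ℝ in 𝓝[>] 0, (f (r + ε * ω)).im ≤ 0 := by
    have hc : Continuous fun ε : ℝ => (r + ε * ω).im := by fun_prop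
    have : ∀ᶠ ε : ℝ in 𝓝 0, 0 < (r + ε * ω).im :=
      hc.continuousAt.eventually_const_lt (by simpa using hr)
    exact (this.filter_mono nhdsWithin_le_nhds).mono fun ε => hf _
  have him := im_div_pow_nonpos_of_tendsto hω0 hlim hnear
  rw [hω, div_mul_cancel_left₀ hA] at him
  norm_num at him

end IsAntiNevanlinna

/-! ### Leading terms and partial fractions of quotients of polynomials -/

theorem tendsto_sub_pow_rootMultiplicity_mul_aeval_div_aeval {k 𝕜 : Type*} [Field k]
    [NormedField 𝕜] [Algebra k 𝕜] (f : k[X]) {g : k[X]} (hg : g ≠ 0) (r : k) :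
    Tendsto (fun z : 𝕜 => (z - algebraMap k 𝕜 r) ^ g.rootMultiplicity r * (aeval z f / aeval z g))
      (𝓝[≠] algebraMap k 𝕜 r)
      (𝓝 (algebraMap k 𝕜 (f.eval r / (g /ₘ (X - C r) ^ g.rootMultiplicity r).eval r))) := by
  set m := g.rootMultiplicity r
  set R := g /ₘ (X - C r) ^ m
  have hfactor : ∀ z : 𝕜, aeval z g = (z - algebraMap k 𝕜 r) ^ m * aeval z R := fun z => by
    rw [← pow_mul_divByMonic_rootMultiplicity_eq g r]
    simp [R, m]
  have hRr : aeval (algebraMap k 𝕜 r) R ≠ 0 := by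
    rw [aeval_algebraMap_apply_eq_algebraMap_eval, _root_.map_ne_zero]
    exact eval_divByMonic_pow_rootMultiplicity_ne_zero r hg
  have hcont : ContinuousAt (fun z : 𝕜 => aeval z f / aeval z R) (algebraMap k 𝕜 r) :=
    f.continuousAt_aeval.div R.continuousAt_aeval hRr
  rw [map_div₀, ← aeval_algebraMap_apply_eq_algebraMap_eval,
    ← aeval_algebraMap_apply_eq_algebraMap_eval]
  refine (hcont.tendsto.mono_left nhdsWithin_le_nhds).congr' ?_
  filter_upwards [self_mem_nhdsWithin] with z hz
  have : (z - algebraMap k 𝕜 r) ^ m ≠ 0 := pow_ne_zero m (sub_ne_zero.2 hz)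
  rw [hfactor]
  field_simp

theorem tendsto_aeval_div_pow_natDegree {k 𝕜 : Type*} [Field k] [NormedField 𝕜] [Algebra k 𝕜]
    (P : k[X]) :
    Tendsto (fun z : 𝕜 => aeval z P / z ^ P.natDegree) (cobounded 𝕜)
      (𝓝 (algebraMap k 𝕜 P.leadingCoeff)) := by
  have hrev : Tendsto (fun z : 𝕜 => aeval z⁻¹ P.reverse) (cobounded 𝕜)
      (𝓝 (algebraMap k 𝕜 P.leadingCoeff)) := by
    have := (P.reverse.continuous_aeval.tendsto (0 : 𝕜)).comp tendsto_inv₀_cobounded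
    rwa [← coeff_zero_eq_aeval_zero', coeff_zero_reverse] at this
  refine hrev.congr' ?_
  filter_upwards [eventually_ne_cobounded 0] with z hz
  have := invertibleOfNonzero hz
  have h := eval₂_reverse_mul_pow (algebraMap k 𝕜) z P
  rw [invOf_eq_inv] at h
  rw [aeval_def, aeval_def, ← h, mul_div_cancel_right₀ _ (pow_ne_zero _ hz)]

theorem tendsto_aeval_div_aeval_div_pow_natDegree {k 𝕜 : Type*} [Field k] [NormedField 𝕜]
    [Algebra k 𝕜] {f g : k[X]} (hg : g ≠ 0) (hfg : g.degree ≤ f.degree) :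
    Tendsto (fun z : 𝕜 => aeval z f / aeval z g / z ^ (f / g).natDegree) (cobounded 𝕜)
      (𝓝 (algebraMap k 𝕜 (f / g).leadingCoeff)) := by
  have hdeg : f.natDegree = g.natDegree + (f / g).natDegree := by
    have hq : f / g ≠ 0 := by simpa [Polynomial.div_eq_zero_iff hg] using hfg
    have hf : f ≠ 0 := by rintro rfl; simp at hq
    have := degree_add_div hg hfg
    rw [degree_eq_natDegree hg, degree_eq_natDegree hq, degree_eq_natDegree hf] at this
    exact_mod_cast this.symm
  have hlim := (tendsto_aeval_div_pow_natDegree (𝕜 := 𝕜) f).div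
    (tendsto_aeval_div_pow_natDegree (𝕜 := 𝕜) g) (by simpa using hg)
  rw [leadingCoeff_div hfg, map_div₀]
  refine hlim.congr' ?_
  filter_upwards [eventually_ne_cobounded 0] with z hz
  simp only [Pi.div_apply, hdeg, pow_add]
  field_simp

theorem eval_div_eval_eq_sum_div_sub_of_degree_lt {K : Type*} [Field K] [DecidableEq K]
    {f g : K[X]} (hg : g.Splits) (hroots : g.roots.Nodup) (hfg : f.degree < g.degree) {x : K}
    (hx : g.eval x ≠ 0) :
    f.eval x / g.eval x
      = ∑ r ∈ g.roots.toFinset, f.eval r / g.derivative.eval r / (x - r) := by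
  have hg0 : g ≠ 0 := by rintro rfl; simp at hx
  set s := g.roots.toFinset with hs
  set N := Lagrange.nodal s id with hN
  have hnodal : g = C g.leadingCoeff * N := by
    conv_lhs => rw [hg.eq_prod_roots]
    simp only [hN, Lagrange.nodal, id, Finset.prod, hs, Multiset.toFinset_val, hroots.dedup]
  have hcard : g.degree = s.card := by
    rw [hg.degree_eq_card_roots hg0, hs, Multiset.toFinset_card_of_nodup hroots]
  have hgx : g.eval x = g.leadingCoeff * N.eval x := by
    conv_lhs => rw [hnodal, eval_mul, eval_C]
  have hder : ∀ r, g.derivative.eval r = g.leadingCoeff * N.derivative.eval r := fun r => by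
    conv_lhs => rw [hnodal, derivative_C_mul, eval_mul, eval_C]
  have hnode : ∀ r ∈ s, x ≠ id r := by
    rintro r hr rfl
    exact hx ((mem_roots hg0).1 (Multiset.mem_toFinset.1 hr))
  have hinterp : f.eval x
      = N.eval x * ∑ r ∈ s, Lagrange.nodalWeight s id r * (x - r)⁻¹ * f.eval r := by
    conv_lhs => rw [Lagrange.eq_interpolate (f := f) Function.injective_id.injOn (hcard ▸ hfg)]
    exact Lagrange.eval_interpolate_not_at_node _ hnode
  have hNx : N.eval x ≠ 0 := right_ne_zero_of_mul (hgx ▸ hx)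
  rw [hinterp, hgx, mul_comm g.leadingCoeff, mul_div_mul_left _ _ hNx, Finset.sum_div]
  refine Finset.sum_congr rfl fun r hr => ?_
  rw [Lagrange.nodalWeight_eq_eval_derivative_nodal hr, hder, id]
  simp only [div_eq_mul_inv, mul_inv]
  ring

theorem eval_div_eval_eq_eval_div_add_sum {K : Type*} [Field K] [DecidableEq K] (f : K[X])
    {g : K[X]} (hg : g.Splits) (hroots : g.roots.Nodup) {x : K} (hx : g.eval x ≠ 0) :
    f.eval x / g.eval x = (f / g).eval x
      + ∑ r ∈ g.roots.toFinset, f.eval r / g.derivative.eval r / (x - r) := by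
  have hg0 : g ≠ 0 := by rintro rfl; simp at hx
  have hdiv : ∀ y, f.eval y = g.eval y * (f / g).eval y + (f % g).eval y := fun y => by
    rw [← eval_mul, ← eval_add, EuclideanDomain.div_add_mod]
  have hmod : ∀ r ∈ g.roots.toFinset, (f % g).eval r = f.eval r := fun r hr => by
    have hr0 : g.eval r = 0 := (mem_roots hg0).1 (Multiset.mem_toFinset.1 hr)
    rw [hdiv r, hr0, zero_mul, zero_add]
  rw [hdiv x, add_div, mul_div_cancel_left₀ _ hx,
    eval_div_eval_eq_sum_div_sub_of_degree_lt hg hroots (EuclideanDomain.mod_lt f hg0) hx]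
  exact congrArg _ (Finset.sum_congr rfl fun r hr => by rw [hmod r hr])

namespace IsAntiNevanlinna

variable {f g : ℝ[X]}

theorem of_mul_div_mul {d : ℝ[X]} (hd : d ≠ 0)
    (h : IsAntiNevanlinna fun z => aeval z (d * f) / aeval z (d * g)) :
    IsAntiNevanlinna fun z => aeval z f / aeval z g := by
  intro z hz
  by_cases hgz : aeval z g = 0
  · simp [hgz]
  have hcont : ContinuousAt (fun y : ℂ => (aeval y f / aeval y g).im) z :=
    Complex.continuous_im.continuousAt.comp
      (f.continuousAt_aeval.div g.continuousAt_aeval hgz)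
  have hdne : ∀ᶠ y in 𝓝[≠] z, aeval y d ≠ 0 := by
    have hfin := (d.rootSet_finite ℂ).eventually_cofinite_notMem
    filter_upwards [hfin.filter_mono (nhdsNE_le_cofinite z)] with y hy hdy
    exact hy (mem_rootSet.2 ⟨hd, hdy⟩)
  have hpos : ∀ᶠ y in 𝓝[≠] z, 0 < y.im :=
    (Complex.continuous_im.continuousAt.eventually_const_lt hz).filter_mono nhdsWithin_le_nhds
  refine le_of_tendsto (hcont.tendsto.mono_left (nhdsWithin_le_nhds (s := {z}ᶜ))) ?_
  filter_upwards [hdne, hpos] with y hdy hy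
  simpa only [map_mul, mul_div_mul_left _ _ hdy] using h y hy

theorem aeval_ne_zero_of_im_pos (h : IsAntiNevanlinna fun z => aeval z f / aeval z g) (hg : g ≠ 0)
    (hfg : IsCoprime f g) {z : ℂ} (hz : 0 < z.im) : aeval z g ≠ 0 := by
  intro hgz
  have hgm : g.map (algebraMap ℝ ℂ) ≠ 0 :=
    (Polynomial.map_ne_zero_iff (algebraMap ℝ ℂ).injective).2 hg
  have hfz : aeval z f ≠ 0 := fun hfz => by
    simpa [hfz, hgz] using hfg.map (aeval z).toRingHom
  have hlim := tendsto_sub_pow_rootMultiplicity_mul_aeval_div_aeval (𝕜 := ℂ)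
    (f.map (algebraMap ℝ ℂ)) hgm z
  simp only [aeval_map_algebraMap, Algebra.algebraMap_self, RingHom.id_apply] at hlim
  refine ((rootMultiplicity_pos hgm).2 (by simpa [aeval_def] using hgz)).ne'
    (h.pole_order_eq_zero_of_im_pos hz ?_ hlim)
  exact div_ne_zero (by simpa [aeval_def] using hfz)
    (eval_divByMonic_pow_rootMultiplicity_ne_zero z hgm)

theorem splits (h : IsAntiNevanlinna fun z => aeval z f / aeval z g) (hg : g ≠ 0)
    (hfg : IsCoprime f g) : g.Splits := by
  refine .of_splits_map (algebraMap ℝ ℂ) (IsAlgClosed.splits _) fun z hz => ?_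
  have hgz : aeval z g = 0 := by simpa [aeval_def] using (mem_roots'.1 hz).2
  have him : z.im ≤ 0 := not_lt.1 fun hpos => h.aeval_ne_zero_of_im_pos hg hfg hpos hgz
  have him' : (conj z).im ≤ 0 := not_lt.1 fun hpos =>
    h.aeval_ne_zero_of_im_pos hg hfg hpos (by rw [aeval_conj, hgz, map_zero])
  rw [Complex.conj_im, neg_nonpos] at him'
  exact ⟨z.re, Complex.ext rfl (le_antisymm him' him)⟩

theorem rootMultiplicity_eq_one_and_residue_pos
    (h : IsAntiNevanlinna fun z => aeval z f / aeval z g) (hg : g ≠ 0) (hfg : IsCoprime f g)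
    {r : ℝ} (hr : g.IsRoot r) :
    g.rootMultiplicity r = 1 ∧ 0 < f.eval r / g.derivative.eval r := by
  have hlim := tendsto_sub_pow_rootMultiplicity_mul_aeval_div_aeval (𝕜 := ℂ) f hg r
  have hfr : f.eval r ≠ 0 := fun hf0 => by simpa [hf0, hr.eq_zero] using hfg.map (evalRingHom r)
  have hA := div_ne_zero hfr (eval_divByMonic_pow_rootMultiplicity_ne_zero r hg)
  obtain ⟨hm, hpos⟩ :=
    (h.pole_order hA hlim).resolve_left ((rootMultiplicity_pos hg).2 hr).ne'
  have hder : g.derivative.eval r = (g /ₘ (X - C r) ^ g.rootMultiplicity r).eval r := by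
    conv_lhs => rw [← pow_mul_divByMonic_rootMultiplicity_eq g r, hm]
    simp [hm]
  exact ⟨hm, hder ▸ hpos⟩

theorem natDegree_div_le_one_and_coeff_nonpos
    (h : IsAntiNevanlinna fun z => aeval z f / aeval z g) (hg : g ≠ 0) :
    (f / g).natDegree ≤ 1 ∧ (f / g).coeff 1 ≤ 0 := by
  by_cases hq : f / g = 0
  · simp [hq]
  have hdeg : g.degree ≤ f.degree := by simpa [Polynomial.div_eq_zero_iff hg] using hq
  rcases h.growth_order (leadingCoeff_ne_zero.2 hq)
    (tendsto_aeval_div_aeval_div_pow_natDegree hg hdeg) with hm | ⟨hm, hneg⟩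
  · exact ⟨by omega, (coeff_eq_zero_of_natDegree_lt (by omega)).le⟩
  · exact ⟨hm.le, by rw [leadingCoeff, hm] at hneg; exact hneg.le⟩

theorem nodup_roots (h : IsAntiNevanlinna fun z => aeval z f / aeval z g) (hg : g ≠ 0)
    (hfg : IsCoprime f g) : g.roots.Nodup := by
  refine Multiset.nodup_iff_count_le_one.2 fun r => ?_
  rw [count_roots]
  by_cases hr : g.IsRoot r
  · exact (h.rootMultiplicity_eq_one_and_residue_pos hg hfg hr).1.le
  · exact (rootMultiplicity_eq_zero hr).trans_le zero_le_one

theorem exists_partialFractions (h : IsAntiNevanlinna fun z => aeval z f / aeval z g)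
    (hg : g ≠ 0) :
    ∃ (s : Finset ℝ) (c : ℝ → ℝ) (α β : ℝ), (∀ r ∈ s, g.IsRoot r) ∧ (∀ r ∈ s, 0 ≤ c r) ∧ β ≤ 0 ∧
      ∀ x, g.eval x ≠ 0 → f.eval x / g.eval x = α + β * x + ∑ r ∈ s, c r / (x - r) := by
  obtain ⟨f, g, d, hfg, rfl, rfl⟩ := UniqueFactorizationMonoid.exists_reduced_factors' f g hg
  replace h := h.of_mul_div_mul (left_ne_zero_of_mul hg)
  replace hfg := hfg.isCoprime
  have hg' : g ≠ 0 := right_ne_zero_of_mul hg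
  have hroot : ∀ r ∈ g.roots.toFinset, g.IsRoot r := fun r hr =>
    (mem_roots hg').1 (Multiset.mem_toFinset.1 hr)
  obtain ⟨hdeg, hβ⟩ := h.natDegree_div_le_one_and_coeff_nonpos hg'
  refine ⟨g.roots.toFinset, fun r => f.eval r / g.derivative.eval r, (f / g).coeff 0,
    (f / g).coeff 1, fun r hr => root_mul_left_of_isRoot d (hroot r hr), fun r hr =>
      (h.rootMultiplicity_eq_one_and_residue_pos hg' hfg (hroot r hr)).2.le, hβ, fun x hx => ?_⟩
  rw [eval_mul] at hx
  rw [eval_mul, eval_mul, mul_div_mul_left _ _ (left_ne_zero_of_mul hx),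
    eval_div_eval_eq_eval_div_add_sum f (h.splits hg' hfg) (h.nodup_roots hg' hfg)
      (right_ne_zero_of_mul hx)]
  conv_lhs => rw [eq_X_add_C_of_natDegree_le_one hdeg]
  simp only [eval_add, eval_mul, eval_C, eval_X]
  ring

end IsAntiNevanlinna

/-! ### Monotonicity and convexity to the right of the poles -/

theorem antitoneOn_const_div_sub {c r : ℝ} (hc : 0 ≤ c) :
    AntitoneOn (fun x => c / (x - r)) (Ioi r) := fun _ hx _ _ hxy =>
  div_le_div_of_nonneg_left hc (sub_pos.2 hx) (sub_le_sub_right hxy r)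

theorem convexOn_const_div_sub {c r : ℝ} (hc : 0 ≤ c) :
    ConvexOn ℝ (Ioi r) fun x => c / (x - r) := by
  simpa [Function.comp_def, div_eq_mul_inv, sub_eq_add_neg] using
    ((convexOn_zpow (𝕜 := ℝ) (-1)).translate_left (-r)).smul hc

theorem antitoneOn_add_sum_div_sub {s : Finset ℝ} {c : ℝ → ℝ} {α β x₀ : ℝ}
    (hc : ∀ r ∈ s, 0 ≤ c r) (hβ : β ≤ 0) (hs : ∀ r ∈ s, r < x₀) :
    AntitoneOn (fun x => α + β * x + ∑ r ∈ s, c r / (x - r)) (Ici x₀) := fun _ hx _ hy hxy =>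
  add_le_add (add_le_add_right (mul_le_mul_of_nonpos_left hxy hβ) α) <|
    Finset.sum_le_sum fun r hr => antitoneOn_const_div_sub (hc r hr)
      ((hs r hr).trans_le hx) ((hs r hr).trans_le hy) hxy

theorem convexOn_add_sum_div_sub {s : Finset ℝ} {c : ℝ → ℝ} {α β x₀ : ℝ}
    (hc : ∀ r ∈ s, 0 ≤ c r) (hs : ∀ r ∈ s, r < x₀) :
    ConvexOn ℝ (Ici x₀) fun x => α + β * x + ∑ r ∈ s, c r / (x - r) := by
  have haffine : ConvexOn ℝ (Ici x₀) fun x => α + β * x :=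
    (convexOn_const α (convex_Ici x₀)).add ((LinearMap.mulLeft ℝ β).convexOn (convex_Ici x₀))
  refine haffine.add ?_
  have := Finset.sum_induction (s := s) (fun r x => c r / (x - r)) (ConvexOn ℝ (Ici x₀))
    (fun _ _ => ConvexOn.add) (convexOn_const 0 (convex_Ici x₀)) fun r hr =>
      (convexOn_const_div_sub (hc r hr)).subset (Ici_subset_Ioi.2 (hs r hr)) (convex_Ici x₀)
  simpa [Finset.sum_fn] using this

namespace IsAntiNevanlinna

variable {f g : ℝ[X]} {x₀ : ℝ}

theorem antitoneOn_eval_div_eval (h : IsAntiNevanlinna fun z => aeval z f / aeval z g)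
    (hroots : ∀ r, g.IsRoot r → r < x₀) :
    AntitoneOn (fun x => f.eval x / g.eval x) (Ici x₀) := by
  have hg : g ≠ 0 := fun hg => (hroots x₀ (hg ▸ eval_zero)).false
  obtain ⟨s, c, α, β, hs, hc, hβ, heq⟩ := h.exists_partialFractions hg
  refine (antitoneOn_add_sum_div_sub (α := α) hc hβ fun r hr => hroots r (hs r hr)).congr
    fun x hx => (heq x fun hgx => (hroots x hgx).not_ge hx).symm

theorem convexOn_eval_div_eval (h : IsAntiNevanlinna fun z => aeval z f / aeval z g)
    (hroots : ∀ r, g.IsRoot r → r < x₀) :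
    ConvexOn ℝ (Ici x₀) fun x => f.eval x / g.eval x := by
  have hg : g ≠ 0 := fun hg => (hroots x₀ (hg ▸ eval_zero)).false
  obtain ⟨s, c, α, β, hs, hc, -, heq⟩ := h.exists_partialFractions hg
  refine (convexOn_add_sum_div_sub (α := α) (β := β) hc fun r hr => hroots r (hs r hr)).congr
    fun x hx => (heq x fun hgx => (hroots x hgx).not_ge hx).symm

end IsAntiNevanlinna

theorem deriv_nonneg_of_monotoneOn_Ici {f : ℝ → ℝ} {a : ℝ} (hf : MonotoneOn f (Ici a)) :
    0 ≤ deriv f a := by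
  by_cases hd : DifferentiableAt ℝ f a
  · rw [← hd.derivWithin (uniqueDiffOn_Ici a a self_mem_Ici)]
    exact hf.derivWithin_nonneg
  · exact (deriv_zero_of_not_differentiableAt hd).ge

theorem deriv_nonpos_of_antitoneOn_Ici {f : ℝ → ℝ} {a : ℝ} (hf : AntitoneOn f (Ici a)) :
    deriv f a ≤ 0 := by
  simpa using deriv_nonneg_of_monotoneOn_Ici hf.neg

theorem iteratedDeriv_two_nonneg_of_convexOn_Ici {f : ℝ → ℝ} {a : ℝ} (hf : ConvexOn ℝ (Ici a) f)
    (hd : ∀ x ∈ Ici a, DifferentiableAt ℝ f x) : 0 ≤ iteratedDeriv 2 f a := by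
  rw [iteratedDeriv_succ, iteratedDeriv_one]
  exact deriv_nonneg_of_monotoneOn_Ici (hf.monotoneOn_deriv hd)

/-! ### Restriction to lines -/

theorem dirDeriv_add {n : ℕ} (u : Fin n → ℝ) (p q : MvPolynomial (Fin n) ℝ) :
    dirDeriv u (p + q) = dirDeriv u p + dirDeriv u q := by
  simp only [dirDeriv, map_add, smul_add, Finset.sum_add_distrib]

theorem dirDeriv_mul {n : ℕ} (u : Fin n → ℝ) (p q : MvPolynomial (Fin n) ℝ) :
    dirDeriv u (p * q) = dirDeriv u p * q + p * dirDeriv u q := by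
  simp only [dirDeriv, Finset.sum_mul, Finset.mul_sum, ← Finset.sum_add_distrib]
  refine Finset.sum_congr rfl fun i _ => ?_
  rw [MvPolynomial.pderiv_mul, smul_add, smul_mul_assoc, mul_smul_comm]

theorem dirDeriv_X {n : ℕ} (u : Fin n → ℝ) (j : Fin n) :
    dirDeriv u (MvPolynomial.X j) = MvPolynomial.C (u j) := by
  rw [dirDeriv, Finset.sum_eq_single j]
  · simp [MvPolynomial.smul_eq_C_mul]
  · intro i _ hij
    rw [MvPolynomial.pderiv_X_of_ne hij.symm, smul_zero]
  · simp

/-- The restriction `X ↦ p(z + X u)` of a real polynomial `p` to the line through `z` with real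
direction `u`, as a univariate polynomial. The base point may have complex coordinates. -/
noncomputable def lineRestriction {σ A : Type*} [CommRing A] [Algebra ℝ A] (z : σ → A)
    (u : σ → ℝ) (p : MvPolynomial σ ℝ) : A[X] :=
  MvPolynomial.aeval (fun i => C (z i) + u i • X) p

theorem aeval_lineRestriction {σ A B : Type*} [CommRing A] [Algebra ℝ A] [CommRing B]
    [Algebra ℝ B] [Algebra A B] [IsScalarTower ℝ A B] (z : σ → A) (u : σ → ℝ)
    (p : MvPolynomial σ ℝ) (x : B) :
    aeval x (lineRestriction z u p)
      = MvPolynomial.aeval (fun i => algebraMap A B (z i) + u i • x) p := by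
  rw [lineRestriction, ← AlgHom.restrictScalars_apply ℝ, MvPolynomial.comp_aeval_apply]
  simp only [map_add, map_smul, AlgHom.restrictScalars_apply, aeval_C, aeval_X]

theorem eval_lineRestriction {σ A : Type*} [CommRing A] [Algebra ℝ A] (z : σ → A) (u : σ → ℝ)
    (p : MvPolynomial σ ℝ) (x : A) :
    (lineRestriction z u p).eval x = MvPolynomial.aeval (fun i => z i + u i • x) p := by
  rw [← coe_aeval_eq_eval, aeval_lineRestriction]
  simp

theorem derivative_lineRestriction {n : ℕ} {A : Type*} [CommRing A] [Algebra ℝ A] (z : Fin n → A)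
    (u : Fin n → ℝ) (p : MvPolynomial (Fin n) ℝ) :
    derivative (lineRestriction z u p) = lineRestriction z u (dirDeriv u p) := by
  induction p using MvPolynomial.induction_on with
  | C r => simp [lineRestriction, Polynomial.algebraMap_apply, dirDeriv]
  | add p q hp hq =>
    rw [dirDeriv_add]
    simp_all [lineRestriction]
  | mul_X p i hp =>
    rw [dirDeriv_mul, dirDeriv_X]
    simp_all [lineRestriction, Polynomial.algebraMap_apply, Algebra.smul_def]

/-! ### Potentials of real stable polynomials -/

theorem im_eval_derivative_div_eval_nonpos {P : ℂ[X]} {x : ℂ}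
    (hroots : ∀ z, P.IsRoot z → z.im ≤ x.im) : (P.derivative.eval x / P.eval x).im ≤ 0 := by
  by_cases hx : P.eval x = 0
  · simp [hx]
  have hP : P ≠ 0 := by
    rintro rfl
    exact hx eval_zero
  rw [(IsAlgClosed.splits P).eval_derivative_div_eval_of_ne_zero hx, ← Complex.imCLM_apply,
    map_multiset_sum, Multiset.map_map]
  refine (Multiset.sum_map_le_sum_map _ (fun _ => 0) fun z hz => ?_).trans_eq (by simp)
  simp only [Function.comp_apply, Complex.imCLM_apply]
  rw [one_div, Complex.inv_im]
  refine div_nonpos_of_nonpos_of_nonneg ?_ (Complex.normSq_nonneg _)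
  simpa using hroots z ((mem_roots hP).1 hz)

namespace RealStable

variable {n : ℕ} {p : MvPolynomial (Fin n) ℝ} {v : Fin n → ℝ}

theorem im_aeval_dirDeriv_div_aeval_nonpos_of_im_pos (hp : RealStable p) (hv : ∀ i, 0 ≤ v i)
    {b : Fin n → ℂ} (hb : ∀ i, 0 < (b i).im) :
    (MvPolynomial.aeval b (dirDeriv v p) / MvPolynomial.aeval b p).im ≤ 0 := by
  have hroots : ∀ s, (lineRestriction b v p).IsRoot s → s.im ≤ (0 : ℂ).im := by
    intro s hs
    by_contra! him
    rw [Complex.zero_im] at him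
    rw [IsRoot.def, eval_lineRestriction] at hs
    refine hp _ (fun i => ?_) hs
    rw [Complex.add_im, Complex.smul_im]
    exact add_pos_of_pos_of_nonneg (hb i) (mul_nonneg (hv i) him.le)
  simpa [derivative_lineRestriction, eval_lineRestriction] using
    im_eval_derivative_div_eval_nonpos hroots

theorem im_aeval_dirDeriv_div_aeval_nonpos (hp : RealStable p) (hv : ∀ i, 0 ≤ v i)
    {b : Fin n → ℂ} (hb : ∀ i, 0 ≤ (b i).im) :
    (MvPolynomial.aeval b (dirDeriv v p) / MvPolynomial.aeval b p).im ≤ 0 := by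
  by_cases hpb : MvPolynomial.aeval b p = 0
  · simp [hpb]
  set F : MvPolynomial (Fin n) ℝ → ℂ[X] := lineRestriction b 1
  have hF : ∀ q z, (F q).eval z = MvPolynomial.aeval (fun i => b i + z) q := fun q z => by
    simp [F, eval_lineRestriction]
  have hcont : ContinuousAt (fun ε : ℝ =>
      ((F (dirDeriv v p)).eval (ε * Complex.I) / (F p).eval (ε * Complex.I)).im) 0 := by
    refine Complex.continuous_im.continuousAt.comp (ContinuousAt.div ?_ ?_ (by simpa [hF]))
    · exact Continuous.continuousAt (by fun_prop)
    · exact Continuous.continuousAt (by fun_prop)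
  have hlim := le_of_tendsto (hcont.tendsto.mono_left nhdsWithin_le_nhds) <| by
    filter_upwards [self_mem_nhdsWithin (s := Ioi (0 : ℝ))] with ε hε
    rw [hF, hF]
    refine hp.im_aeval_dirDeriv_div_aeval_nonpos_of_im_pos hv fun i => ?_
    simpa using add_pos_of_nonneg_of_pos (hb i) hε
  simpa [hF] using hlim

theorem isAntiNevanlinna_lineRestriction (hp : RealStable p) (hv : ∀ i, 0 ≤ v i) (a : Fin n → ℝ)
    {w : Fin n → ℝ} (hw : ∀ i, 0 ≤ w i) :
    IsAntiNevanlinna fun z =>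
      aeval z (lineRestriction a w (dirDeriv v p)) / aeval z (lineRestriction a w p) := by
  intro z hz
  simp only [aeval_lineRestriction]
  refine hp.im_aeval_dirDeriv_div_aeval_nonpos hv fun i => ?_
  simpa using mul_nonneg (hw i) hz.le

end RealStable

theorem eval_lineRestriction_real {σ : Type*} (a u : σ → ℝ) (p : MvPolynomial σ ℝ) (t : ℝ) :
    (lineRestriction a u p).eval t = MvPolynomial.eval (a + t • u) p := by
  rw [eval_lineRestriction, MvPolynomial.aeval_eq_eval]
  congr 2
  ext i
  simp [mul_comm]

theorem potential_add_smul {n : ℕ} (v w : Fin n → ℝ) (p : MvPolynomial (Fin n) ℝ)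
    (a : Fin n → ℝ) (t : ℝ) :
    potential v p (a + t • w)
      = (lineRestriction a w (dirDeriv v p)).eval t / (lineRestriction a w p).eval t := by
  rw [eval_lineRestriction_real, eval_lineRestriction_real, potential]

theorem AboveRoots.eval_add_smul_ne_zero {σ : Type*} {p : MvPolynomial σ ℝ} {a w : σ → ℝ}
    (ha : AboveRoots p a) (hw : ∀ i, 0 ≤ w i) {t : ℝ} (ht : 0 ≤ t) :
    MvPolynomial.eval (a + t • w) p ≠ 0 :=
  ha _ fun i => mul_nonneg ht (hw i)

theorem AboveRoots.lt_zero_of_isRoot_lineRestriction {σ : Type*} {p : MvPolynomial σ ℝ}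
    {a w : σ → ℝ} (ha : AboveRoots p a) (hw : ∀ i, 0 ≤ w i) {t : ℝ}
    (ht : (lineRestriction a w p).IsRoot t) : t < 0 := by
  by_contra! h
  exact ha.eval_add_smul_ne_zero hw h (by rwa [← eval_lineRestriction_real])

theorem AboveRoots.differentiableAt_potential {n : ℕ} {p : MvPolynomial (Fin n) ℝ}
    {a w : Fin n → ℝ} (ha : AboveRoots p a) (v : Fin n → ℝ) (hw : ∀ i, 0 ≤ w i) {t : ℝ}
    (ht : 0 ≤ t) : DifferentiableAt ℝ (fun t : ℝ => potential v p (a + t • w)) t := by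
  simp only [potential_add_smul]
  refine (Polynomial.differentiableAt _).div (Polynomial.differentiableAt _) ?_
  rw [eval_lineRestriction_real]
  exact ha.eval_add_smul_ne_zero hw ht

namespace RealStable

variable {n : ℕ} {p : MvPolynomial (Fin n) ℝ} {a v w : Fin n → ℝ}

theorem antitoneOn_potential (hp : RealStable p) (ha : AboveRoots p a) (hv : ∀ i, 0 ≤ v i)
    (hw : ∀ i, 0 ≤ w i) : AntitoneOn (fun t : ℝ => potential v p (a + t • w)) (Ici 0) := by
  simp only [potential_add_smul]
  exact (hp.isAntiNevanlinna_lineRestriction hv a hw).antitoneOn_eval_div_eval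
    fun _ => ha.lt_zero_of_isRoot_lineRestriction hw

theorem convexOn_potential (hp : RealStable p) (ha : AboveRoots p a) (hv : ∀ i, 0 ≤ v i)
    (hw : ∀ i, 0 ≤ w i) : ConvexOn ℝ (Ici 0) fun t : ℝ => potential v p (a + t • w) := by
  simp only [potential_add_smul]
  exact (hp.isAntiNevanlinna_lineRestriction hv a hw).convexOn_eval_div_eval
    fun _ => ha.lt_zero_of_isRoot_lineRestriction hw

theorem potential_nonneg (hp : RealStable p) (ha : AboveRoots p a) (hv : ∀ i, 0 ≤ v i) :
    0 ≤ potential v p a := by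
  have hne : lineRestriction a v p ≠ 0 := fun h =>
    (ha.lt_zero_of_isRoot_lineRestriction hv (t := 0) (h ▸ eval_zero)).false
  have hlim : Tendsto (fun t : ℝ => potential v p (a + t • v)) atTop (𝓝 0) := by
    simp only [potential_add_smul, ← derivative_lineRestriction]
    exact div_tendsto_atTop_zero_of_degree_lt _ _ (degree_derivative_lt hne)
  refine le_of_tendsto hlim ?_
  filter_upwards [eventually_ge_atTop 0] with t ht
  simpa using hp.antitoneOn_potential ha hv hv self_mem_Ici ht ht

end RealStable

theorem potential_nonneg_monotone_convex_general {n : ℕ} {p : MvPolynomial (Fin n) ℝ}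
    (hps : RealStable p) {a : Fin n → ℝ} (ha : AboveRoots p a) {v w : Fin n → ℝ}
    (hv0 : ∀ i, 0 ≤ v i) (hw0 : ∀ i, 0 ≤ w i) :
    0 ≤ potential v p a ∧
      deriv (fun t : ℝ => potential v p (a + t • w)) 0 ≤ 0 ∧
      0 ≤ iteratedDeriv 2 (fun t : ℝ => potential v p (a + t • w)) 0 :=
  ⟨hps.potential_nonneg ha hv0,
    deriv_nonpos_of_antitoneOn_Ici (hps.antitoneOn_potential ha hv0 hw0),
    iteratedDeriv_two_nonneg_of_convexOn_Ici (hps.convexOn_potential ha hv0 hw0)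
      fun _ ht => ha.differentiableAt_potential v hw0 ht⟩

/-- Monotonicity and convexity of the logarithmic potential of a real stable polynomial
above its roots: `Φ^v_p(a) ≥ 0`, `D_w Φ^v_p(a) ≤ 0` and `D_w² Φ^v_p(a) ≥ 0`, where the
directional derivatives along `w` are taken as derivatives of `t ↦ Φ^v_p(a + t·w)` at
`t = 0`. -/
theorem potential_nonneg_monotone_convex {n : ℕ} (p : MvPolynomial (Fin n) ℝ)
    (hp0 : p ≠ 0) (hps : RealStable p) (a : Fin n → ℝ) (ha : AboveRoots p a)
    (v w : Fin n → ℝ) (hv0 : ∀ i, 0 ≤ v i) (hw0 : ∀ i, 0 ≤ w i)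
    (hv1 : ∑ i, v i ^ 2 = 1) (hw1 : ∑ i, w i ^ 2 = 1) :
    0 ≤ potential v p a ∧
      deriv (fun t : ℝ => potential v p (a + t • w)) 0 ≤ 0 ∧
      0 ≤ iteratedDeriv 2 (fun t : ℝ => potential v p (a + t • w)) 0 :=
  potential_nonneg_monotone_convex_general hps ha hv0 hw0
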